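/- Let K_{n_1,…,n_k} = K_{r_1·n_1,…,r_s·n_s} be a complete k-partite graph in which at least one part size occurs with multiplicity at least 3, i.e., r_i ≥ 3 for some i ∈ {1,…,s}. Then K_{n_1,…,n_k} is S-determined: every graph with the same Seidel spectrum as K_{n_1,…,n_k} is switching equivalent to a graph isomorphic to K_{n_1,…,n_k}. -/

import Mathlib

open Polynomial Matrix Finset SimpleGraph

/- The Seidel matrix `S(G) = J - I - 2A(G)` of a simple graph `G`. -/
open scoped Classical in
noncomputable def seidelMatrix {V : Type*} [Fintype V] [DecidableEq V]
    (G : SimpleGraph V) : Matrix V V ℝ :=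
  (Matrix.of fun _ _ => (1 : ℝ)) - 1 - 2 • G.adjMatrix ℝ

/-- Two graphs on the same vertex set are switching equivalent iff their Seidel
matrices are conjugate by a diagonal `±1` matrix. -/
def SwitchingEquiv {V : Type*} [Fintype V] [DecidableEq V]
    (G H : SimpleGraph V) : Prop :=
  ∃ ε : V → ℝ, (∀ v, ε v = 1 ∨ ε v = -1) ∧
    seidelMatrix H = Matrix.diagonal ε * seidelMatrix G * Matrix.diagonal ε

/-- A graph `G` is determined, up to switching, by its Seidel spectrum
(`S`-determined) if every graph with the same Seidel spectrum is switching
equivalent to a graph isomorphic to `G`. -/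
def SDetermined {V : Type} [Fintype V] [DecidableEq V] (G : SimpleGraph V) : Prop :=
  ∀ (W : Type) [Fintype W] [DecidableEq W] (H : SimpleGraph W),
    (seidelMatrix H).charpoly = (seidelMatrix G).charpoly →
    ∃ H' : SimpleGraph W, SwitchingEquiv H H' ∧ Nonempty (H' ≃g G)

/-!
Put `M(G) = S(G) + I = J - 2A(G)`, and let `N` be the vertex-part incidence matrix of a complete
multipartite graph `G` with `k` parts of sizes `wᵢ`.

Since `M(G) = 2NNᵀ - J`, the matrix `M(G)` has at most one negative eigenvalue, and so has `M(H)`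
for every `H` cospectral with `G`. As `M(H)` is not positive semidefinite, `H` can be switched to
contain a triangle `s`, and then, by switching the remaining vertices, to make the sum of every row
of `M(H)` over `s` negative. The form of `M(H)` is negative at the indicator `z` of `s`, so a vector
`d` with `dᵀ M d = dᵀ M z = 0` lies in the kernel of `M`. Applied to `d = e_u - e_v`, this says that
nonadjacent vertices `u`, `v` with the same row sum over `s` are twins. Row sums of nonadjacent
vertices do agree: these sums are `-3` or `-1`, and a vertex with sum `-1` is a twin of any `t ∈ s`
it is not adjacent to, so its nonneighbours are not adjacent to `t` either and have sum `-1`. Hence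
nonadjacent vertices are twins, i.e. the switched graph is complete multipartite.

It remains to recover the sizes `wᵢ` from the characteristic polynomial of `M(G)`, which up to a
power of `X` is the secular polynomial `f` of `2 diag(w) - 1wᵀ`. With `q = ∏ (X - 2wᵢ)` one has
`2f = X q' - (k - 2) q`, so `f(0) ≠ 0` for `k ≠ 2`, and the power of `X` determines `k`. If a size
`c` occurs three times, then `2c` is a double root of `f`, and the Wronskian of `f` and `q`, a sum
of squares up to sign, shows that every other size vector with the same `f` also has `2c` as a root
of its `q`. The difference `δ` of the two polynomials `q` satisfies `X δ' = (k - 2) δ`, so it is a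
monomial, and it vanishes at `2c ≠ 0`; hence `δ = 0`.
-/

section SecularPolynomial

open Lagrange

variable {ι κ R : Type*} [Fintype ι] [Fintype κ] [CommRing R]

lemma X_sub_C_pow_card_dvd_nodal [DecidableEq R] (a : ι → R) (p : R) :
    (X - C p) ^ #{i | a i = p} ∣ nodal univ a := by
  rw [← prod_const, nodal_eq]
  calc
    _ = ∏ i with a i = p, (X - C (a i)) := prod_congr rfl fun i hi => by simp_all
    _ ∣ _ := prod_dvd_prod_of_subset _ _ _ (filter_subset _ _)

lemma roots_nodal_univ [IsDomain R] (a : ι → R) : (nodal univ a).roots = univ.val.map a := by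
  simpa [nodal_eq] using roots_multiset_prod_X_sub_C (univ.val.map a)

lemma exists_equiv_of_nodal_eq [IsDomain R] {a : ι → R} {b : κ → R}
    (h : nodal univ a = nodal univ b) : ∃ e : ι ≃ κ, ∀ i, b (e i) = a i := by
  classical
  have hcount (c : R) : Fintype.card {i // a i = c} = Fintype.card {j // b j = c} := by
    have hc := congrArg (fun q => q.roots.count c) h
    simpa only [roots_nodal_univ, Multiset.count_map, ← filter_val, ← card_def, eq_comm (a := c),
      ← Fintype.card_subtype] using hc
  let e (c : R) := Fintype.equivOfCardEq (hcount c)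
  exact ⟨Equiv.ofFiberEquiv e, Equiv.ofFiberEquiv_map e⟩

variable [DecidableEq ι] [DecidableEq κ]

/-- The numerator `∏ (X - aᵢ) + ∑ wᵢ ∏_{j ≠ i} (X - aⱼ)` of the secular function
`1 + ∑ wᵢ / (x - aᵢ)` of a rank-one perturbation of `diagonal a`. -/
noncomputable def secularPoly (a w : ι → R) : R[X] :=
  nodal univ a + ∑ i, C (w i) * nodal (univ.erase i) a

lemma det_diagonal_add_vecMulVec {K : Type*} [Field K] {a : ι → K} (ha : ∀ i, a i ≠ 0)
    (u v : ι → K) :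
    (diagonal a + vecMulVec u v).det = ∏ i, a i + ∑ i, u i * v i * ∏ j ∈ univ.erase i, a j := by
  have hdet : IsUnit (diagonal a).det := by
    simpa [det_diagonal, isUnit_iff_ne_zero, Finset.prod_ne_zero_iff] using ha
  have hinv : (diagonal a)⁻¹ = diagonal a⁻¹ :=
    inv_eq_right_inv <| by simp [diagonal_mul_diagonal, ha]
  rw [vecMulVec_eq Unit, det_add_replicateCol_mul_replicateRow hdet, hinv, det_diagonal,
    det_unique, Matrix.add_apply, one_apply_eq, mul_apply]
  simp only [mul_diagonal, replicateRow_apply, replicateCol_apply, Pi.inv_apply, mul_add, mul_one,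
    Finset.mul_sum]
  refine congrArg _ (sum_congr rfl fun i _ => ?_)
  rw [← mul_prod_erase univ a (mem_univ i)]
  field_simp [ha i]

lemma charpoly_diagonal_sub_vecMulVec [IsDomain R] (a u v : ι → R) :
    (diagonal a - vecMulVec u v).charpoly = secularPoly a (u * v) := by
  let φ := algebraMap R[X] (FractionRing R[X])
  have hφ : Function.Injective φ := IsFractionRing.injective _ _
  have hmap : φ.mapMatrix (charmatrix (diagonal a - vecMulVec u v)) =
      diagonal (fun i => φ (X - C (a i))) +
        vecMulVec (fun i => φ (C (u i))) (fun i => φ (C (v i))) := by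
    ext i j
    obtain rfl | hij := eq_or_ne i j
    · simp [vecMulVec_apply, ← add_sub_right_comm, sub_sub_eq_add_sub]
    · simp [vecMulVec_apply, hij]
  apply hφ
  rw [charpoly, φ.map_det, hmap, det_diagonal_add_vecMulVec fun i =>
    (map_ne_zero_iff φ hφ).mpr (X_sub_C_ne_zero _)]
  simp [secularPoly, nodal_eq]

lemma secularPoly_wronskian (a w : ι → R) :
    derivative (secularPoly a w) * nodal univ a - secularPoly a w * derivative (nodal univ a) =
      -∑ i, C (w i) * nodal (univ.erase i) a ^ 2 := by
  have hterm (i : ι) : derivative (nodal (univ.erase i) a) * nodal univ a -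
      nodal (univ.erase i) a * derivative (nodal univ a) = -nodal (univ.erase i) a ^ 2 := by
    rw [nodal_eq_mul_nodal_erase (mem_univ i), derivative_mul, derivative_X_sub_C]
    ring
  calc
    _ = ∑ i, C (w i) * (derivative (nodal (univ.erase i) a) * nodal univ a -
          nodal (univ.erase i) a * derivative (nodal univ a)) := by
      simp only [secularPoly, derivative_add, derivative_sum, derivative_C_mul, mul_sub,
        sum_sub_distrib, add_mul, sum_mul, mul_assoc]
      ring
    _ = _ := by simp only [hterm, mul_neg, sum_neg_distrib]

lemma isRoot_nodal_of_double_root_secularPoly {a w : ι → ℝ} (hw : ∀ i, 0 < w i) {p : ℝ}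
    (hp : (X - C p) ^ 2 ∣ secularPoly a w) : (nodal univ a).IsRoot p := by
  have hroot : (secularPoly a w).eval p = 0 :=
    dvd_iff_isRoot.mp <| (dvd_pow_self _ two_ne_zero).trans hp
  have hroot' : (derivative (secularPoly a w)).eval p = 0 :=
    dvd_iff_isRoot.mp <| by simpa using pow_sub_one_dvd_derivative_of_pow_dvd hp
  have hsum : ∑ i, w i * (nodal (univ.erase i) a).eval p ^ 2 = 0 := by
    simpa [hroot, hroot', eval_finsetSum] using congrArg (eval p) (secularPoly_wronskian a w)
  have herase (i : ι) : (nodal (univ.erase i) a).eval p = 0 := by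
    have hi := (sum_eq_zero_iff_of_nonneg fun i _ => mul_nonneg (hw i).le (sq_nonneg _)).mp hsum i
      (mem_univ i)
    simpa [(hw i).ne'] using hi
  simpa [secularPoly, eval_finsetSum, herase] using hroot

lemma two_mul_secularPoly_two_mul (w : ι → R) :
    2 * secularPoly (2 * w) w =
      X * derivative (nodal univ (2 * w)) - ((Fintype.card ι : R[X]) - 2) * nodal univ (2 * w) := by
  have hterm (i : ι) : 2 * (C (w i) * nodal (univ.erase i) (2 * w)) =
      X * nodal (univ.erase i) (2 * w) - nodal univ (2 * w) := by
    rw [nodal_eq_mul_nodal_erase (mem_univ i)]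
    simp only [Pi.mul_apply, Pi.ofNat_apply, C_mul, C_ofNat]
    ring
  rw [secularPoly, mul_add, mul_sum, sum_congr rfl fun i _ => hterm i, sum_sub_distrib, ← mul_sum,
    ← derivative_nodal, sum_const, card_univ, nsmul_eq_mul]
  ring

lemma coeff_zero_secularPoly_ne_zero [IsDomain R] [CharZero R] {w : ι → R} (hw : ∀ i, w i ≠ 0)
    (hι : Fintype.card ι ≠ 2) : (secularPoly (2 * w) w).coeff 0 ≠ 0 := by
  have heval : 2 * (secularPoly (2 * w) w).eval 0 =
      -((Fintype.card ι - 2 : R) * (nodal univ (2 * w)).eval 0) := by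
    simpa using congrArg (eval 0) (two_mul_secularPoly_two_mul w)
  have hcard : (Fintype.card ι - 2 : R) ≠ 0 := sub_ne_zero.mpr (mod_cast hι)
  have hnodal : (nodal univ (2 * w)).eval 0 ≠ 0 := by
    simp [eval_nodal, Finset.prod_ne_zero_iff, hw]
  rw [coeff_zero_eq_eval_zero]
  exact right_ne_zero_of_mul (heval ▸ neg_ne_zero.mpr (mul_ne_zero hcard hnodal))

lemma eq_zero_of_X_mul_derivative_eq_C_mul [IsDomain R] [CharZero R] {f : R[X]} {c p : R}
    (hf : X * derivative f = C c * f) (hp : p ≠ 0) (hroot : f.IsRoot p) : f = 0 := by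
  by_contra hf0
  have hcoeff (n : ℕ) : (n : R) * f.coeff n = c * f.coeff n := by
    have h := congrArg (coeff · n) hf
    cases n with
    | zero => simpa using h
    | succ n => simpa [coeff_derivative, mul_comm] using h
  have hdeg : (f.natDegree : R) = c :=
    mul_right_cancel₀ (leadingCoeff_ne_zero.mpr hf0) (hcoeff f.natDegree)
  have hmonomial : f = monomial f.natDegree f.leadingCoeff := by
    ext n
    obtain rfl | hn := eq_or_ne n f.natDegree
    · simp
    · rw [coeff_monomial_of_ne _ hn]
      by_contra hne
      exact hn (mod_cast (mul_right_cancel₀ hne (hcoeff n)).trans hdeg.symm)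
  rw [IsRoot, hmonomial, eval_monomial] at hroot
  exact mul_ne_zero (leadingCoeff_ne_zero.mpr hf0) (pow_ne_zero _ hp) hroot

lemma nodal_eq_of_secularPoly_eq {w : ι → ℝ} {z : κ → ℝ} (hz : ∀ j, 0 < z j)
    (hcard : Fintype.card ι = Fintype.card κ) {p : ℝ} (hp : p ≠ 0)
    (hdvd : (X - C p) ^ 3 ∣ nodal univ (2 * w))
    (h : secularPoly (2 * w) w = secularPoly (2 * z) z) :
    nodal univ (2 * w) = nodal univ (2 * z) := by
  have hdouble : (X - C p) ^ 2 ∣ 2 * secularPoly (2 * w) w := by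
    rw [two_mul_secularPoly_two_mul]
    exact dvd_sub ((pow_sub_one_dvd_derivative_of_pow_dvd hdvd).mul_left _)
      (((pow_dvd_pow _ (by norm_num)).trans hdvd).mul_left _)
  have htwo : IsUnit (2 : ℝ[X]) := isUnit_C.mpr (isUnit_of_invertible (2 : ℝ))
  have hroot_z : (nodal univ (2 * z)).IsRoot p :=
    isRoot_nodal_of_double_root_secularPoly hz (h ▸ htwo.dvd_mul_left.mp hdouble)
  have hroot_w : (nodal univ (2 * w)).IsRoot p :=
    dvd_iff_isRoot.mp ((dvd_pow_self _ three_ne_zero).trans hdvd)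
  refine sub_eq_zero.mp (eq_zero_of_X_mul_derivative_eq_C_mul (c := Fintype.card ι - 2) ?_ hp
    (by simp [hroot_w.eq_zero, hroot_z.eq_zero]))
  have hdiff := congrArg (2 * ·) h
  simp only [two_mul_secularPoly_two_mul, ← hcard] at hdiff
  simp only [derivative_sub, C_sub, map_natCast, C_ofNat]
  linear_combination hdiff

lemma eq_and_eq_of_X_pow_mul_eq {f g : R[X]} {m n : ℕ} (hf : f.coeff 0 ≠ 0)
    (hg : g.coeff 0 ≠ 0) (h : X ^ m * f = X ^ n * g) : m = n ∧ f = g := by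
  have hf' : f.natTrailingDegree = 0 := natTrailingDegree_eq_zero.mpr (Or.inr hf)
  have hg' : g.natTrailingDegree = 0 := natTrailingDegree_eq_zero.mpr (Or.inr hg)
  have hmn := congrArg natTrailingDegree h
  rw [X_pow_mul, X_pow_mul, natTrailingDegree_mul_X_pow (by rintro rfl; simp at hf),
    natTrailingDegree_mul_X_pow (by rintro rfl; simp at hg), hf', hg', zero_add, zero_add] at hmn
  subst hmn
  exact ⟨rfl, (isRegular_X_pow m).left h⟩

lemma exists_equiv_of_X_pow_mul_secularPoly_eq {w : ι → ℝ} {z : κ → ℝ} (hw : ∀ i, 0 < w i)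
    (hz : ∀ j, 0 < z j) {c : ℝ} (hc : 3 ≤ #{i | w i = c}) (hκ : 3 ≤ Fintype.card κ)
    (h : X ^ Fintype.card κ * secularPoly (2 * w) w =
      X ^ Fintype.card ι * secularPoly (2 * z) z) :
    ∃ e : ι ≃ κ, ∀ i, z (e i) = w i := by
  have hι : 3 ≤ Fintype.card ι := hc.trans (card_filter_le _ _)
  obtain ⟨hcard, hsecular⟩ := eq_and_eq_of_X_pow_mul_eq
    (coeff_zero_secularPoly_ne_zero (fun i => (hw i).ne') (by lia))
    (coeff_zero_secularPoly_ne_zero (fun j => (hz j).ne') (by lia)) h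
  have hc_ne : 2 * c ≠ 0 := by
    obtain ⟨i, hi⟩ := card_pos.mp (three_pos.trans_le hc)
    simpa [(mem_filter.mp hi).2] using (hw i).ne'
  have htriple : (X - C (2 * c)) ^ 3 ∣ nodal univ (2 * w) :=
    (pow_dvd_pow _ (by simpa using hc)).trans (X_sub_C_pow_card_dvd_nodal (2 * w) (2 * c))
  obtain ⟨e, he⟩ := exists_equiv_of_nodal_eq
    (nodal_eq_of_secularPoly_eq hz hcard.symm hc_ne htriple hsecular)
  exact ⟨e, fun i => by simpa using he i⟩

end SecularPolynomial

section NegIndex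

variable {m n : Type*} [Fintype m]

/-- The real symmetric matrix `M` has at most one negative eigenvalue, encoded as: `M` becomes
positive semidefinite after adding a rank-one square. -/
def NegIndexLEOne (M : Matrix n n ℝ) : Prop :=
  ∃ ℓ : n → ℝ, (M + vecMulVec ℓ ℓ).PosSemidef

namespace NegIndexLEOne

lemma isHermitian {M : Matrix n n ℝ} (h : NegIndexLEOne M) : M.IsHermitian := by
  obtain ⟨ℓ, hℓ⟩ := h
  have hvec : (vecMulVec ℓ ℓ).IsHermitian := .ext fun i j => by simp [vecMulVec_apply, mul_comm]
  simpa using hℓ.isHermitian.sub hvec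

lemma conjTranspose_mul_mul_same [Finite n] {M : Matrix m m ℝ} (h : NegIndexLEOne M)
    (U : Matrix m n ℝ) : NegIndexLEOne (Uᴴ * M * U) := by
  obtain ⟨ℓ, hℓ⟩ := h
  refine ⟨ℓ ᵥ* U, ?_⟩
  have hU := hℓ.conjTranspose_mul_mul_same U
  rwa [Matrix.mul_add, Matrix.add_mul, mul_vecMulVec, vecMulVec_mul,
    conjTranspose_eq_transpose_of_trivial, mulVec_transpose] at hU

lemma mulVec_eq_zero {M : Matrix m m ℝ} (h : NegIndexLEOne M) {z d : m → ℝ}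
    (hz : z ⬝ᵥ M *ᵥ z < 0) (hd : d ⬝ᵥ M *ᵥ d = 0) (hdz : d ⬝ᵥ M *ᵥ z = 0) : M *ᵥ d = 0 := by
  have hzd : z ⬝ᵥ M *ᵥ d = 0 := by
    rw [dotProduct_mulVec, ← mulVec_transpose, ← conjTranspose_eq_transpose_of_trivial,
      h.isHermitian, dotProduct_comm, hdz]
  obtain ⟨ℓ, hℓ⟩ := h
  have hform (x : m → ℝ) : x ⬝ᵥ (M + vecMulVec ℓ ℓ) *ᵥ x = x ⬝ᵥ M *ᵥ x + (ℓ ⬝ᵥ x) ^ 2 := by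
    simp [add_mulVec, vecMulVec_mulVec, dotProduct_comm x ℓ, sq]
  have hnonneg (x : m → ℝ) : 0 ≤ x ⬝ᵥ M *ᵥ x + (ℓ ⬝ᵥ x) ^ 2 := by
    simpa [hform] using hℓ.dotProduct_mulVec_nonneg x
  have hℓd : ℓ ⬝ᵥ d = 0 := by
    -- A nonzero combination `x` of `z` and `d` with `ℓ ⬝ᵥ x = 0`, tested against `M`.
    set x := (ℓ ⬝ᵥ z) • d - (ℓ ⬝ᵥ d) • z with hx
    have hℓx : ℓ ⬝ᵥ x = 0 := by simp [hx, mul_comm]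
    have hMx : x ⬝ᵥ M *ᵥ x = (ℓ ⬝ᵥ d) ^ 2 * (z ⬝ᵥ M *ᵥ z) := by
      simp only [hx, mulVec_sub, mulVec_smul, sub_dotProduct, dotProduct_sub, smul_dotProduct,
        dotProduct_smul, hd, hdz, hzd, smul_eq_mul]
      ring
    have hx_nonneg := hnonneg x
    rw [hℓx, hMx, zero_pow two_ne_zero, add_zero] at hx_nonneg
    have hsq := nonpos_of_mul_nonneg_left hx_nonneg hz
    exact pow_eq_zero_iff two_ne_zero |>.mp (le_antisymm hsq (sq_nonneg _))
  have hker : (M + vecMulVec ℓ ℓ) *ᵥ d = 0 :=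
    (hℓ.dotProduct_mulVec_zero_iff d).mp (by simp [hform, hd, hℓd])
  simpa [add_mulVec, vecMulVec_mulVec, hℓd] using hker

end NegIndexLEOne

end NegIndex

section Cospectral

variable {𝕜 m n : Type*} [RCLike 𝕜] [Fintype m] [DecidableEq m] [Fintype n] [DecidableEq n]

lemma exists_eq_conjTranspose_mul_mul_of_charpoly_eq {A : Matrix m m 𝕜} {B : Matrix n n 𝕜}
    (hA : A.IsHermitian) (hB : B.IsHermitian) (h : A.charpoly = B.charpoly) :
    ∃ U : Matrix m n 𝕜, B = Uᴴ * A * U := by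
  have hcard : Fintype.card n = Fintype.card m := by
    rw [← charpoly_natDegree_eq_dim B, ← h, charpoly_natDegree_eq_dim]
  let e := Fintype.equivOfCardEq hcard
  let B' := reindex e e B
  have hB' : B'.IsHermitian := hB.submatrix _
  let P : Matrix m m 𝕜 := hA.eigenvectorUnitary
  let Q : Matrix m m 𝕜 := hB'.eigenvectorUnitary
  have hAB' : B' = (P * Qᴴ)ᴴ * A * (P * Qᴴ) := by
    have hdiag := hA.conjStarAlgAut_star_eigenvectorUnitary
    rw [(hA.eigenvalues_eq_eigenvalues_iff hB').mpr (by rw [h, charpoly_reindex])] at hdiag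
    have hspec := hB'.spectral_theorem
    rw [← hdiag] at hspec
    simp only [Unitary.conjStarAlgAut_apply] at hspec
    conv_lhs => rw [hspec]
    simp [P, Q, star_eq_conjTranspose, Matrix.mul_assoc]
  refine ⟨(P * Qᴴ).submatrix id e, ?_⟩
  have hB'' : B = B'.submatrix e e := by simp [B']
  conv_lhs => rw [hB'', hAB']
  rfl

open scoped ComplexOrder in
lemma posSemidef_of_charpoly_eq {A : Matrix m m 𝕜} {B : Matrix n n 𝕜} (hA : A.PosSemidef)
    (hB : B.IsHermitian) (h : A.charpoly = B.charpoly) : B.PosSemidef := by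
  obtain ⟨U, rfl⟩ := exists_eq_conjTranspose_mul_mul_of_charpoly_eq hA.isHermitian hB h
  exact hA.conjTranspose_mul_mul_same U

lemma NegIndexLEOne.of_charpoly_eq {A : Matrix m m ℝ} {B : Matrix n n ℝ} (hA : NegIndexLEOne A)
    (hB : B.IsHermitian) (h : A.charpoly = B.charpoly) : NegIndexLEOne B := by
  obtain ⟨U, rfl⟩ := exists_eq_conjTranspose_mul_mul_of_charpoly_eq hA.isHermitian hB h
  exact hA.conjTranspose_mul_mul_same U

lemma charpoly_diagonal_mul_mul_diagonal {R : Type*} [CommRing R] {e : n → R}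
    (he : ∀ i, e i * e i = 1) (M : Matrix n n R) :
    (diagonal e * M * diagonal e).charpoly = M.charpoly := by
  rw [charpoly_mul_comm, ← Matrix.mul_assoc, diagonal_mul_diagonal, funext he, diagonal_one,
    Matrix.one_mul]

end Cospectral

section ShiftedSeidel

variable {V : Type*} [Fintype V] [DecidableEq V] {G H K : SimpleGraph V}

/-- The matrix `S(G) + I = J - 2A(G)`, with entry `-1` at adjacent pairs and `1` elsewhere. -/
noncomputable def shiftedSeidel (G : SimpleGraph V) : Matrix V V ℝ :=
  seidelMatrix G + 1

lemma shiftedSeidel_apply [DecidableRel G.Adj] (u v : V) :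
    shiftedSeidel G u v = if G.Adj u v then -1 else 1 := by
  simp only [shiftedSeidel, seidelMatrix, Matrix.add_apply, Matrix.sub_apply, Matrix.smul_apply,
    Matrix.of_apply, adjMatrix_apply]
  split_ifs
  · rw [two_nsmul]
    ring
  · simp

lemma shiftedSeidel_eq_neg_one_iff {u v : V} : shiftedSeidel G u v = -1 ↔ G.Adj u v := by
  classical
  rw [shiftedSeidel_apply]
  split_ifs with h <;> norm_num [h]

lemma shiftedSeidel_eq_one_iff {u v : V} : shiftedSeidel G u v = 1 ↔ ¬G.Adj u v := by
  classical
  rw [shiftedSeidel_apply]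
  split_ifs with h <;> norm_num [h]

lemma shiftedSeidel_eq_one_or_neg_one (G : SimpleGraph V) (u v : V) :
    shiftedSeidel G u v = 1 ∨ shiftedSeidel G u v = -1 := by
  rw [shiftedSeidel_eq_one_iff, shiftedSeidel_eq_neg_one_iff]
  exact (em _).symm

lemma shiftedSeidel_self (v : V) : shiftedSeidel G v v = 1 :=
  shiftedSeidel_eq_one_iff.mpr (G.loopless.irrefl v)

lemma shiftedSeidel_comm (u v : V) : shiftedSeidel G u v = shiftedSeidel G v u := by
  classical
  simp only [shiftedSeidel_apply, G.adj_comm]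

lemma isHermitian_shiftedSeidel : (shiftedSeidel G).IsHermitian :=
  .ext fun _ _ => shiftedSeidel_comm _ _

lemma charpoly_shiftedSeidel :
    (shiftedSeidel G).charpoly = (seidelMatrix G).charpoly.comp (X - 1) := by
  simpa [sub_eq_add_neg, shiftedSeidel] using charpoly_sub_scalar (seidelMatrix G) (-1)

lemma charpoly_shiftedSeidel_of_iso {W : Type*} [Fintype W] [DecidableEq W] {H : SimpleGraph W}
    (e : G ≃g H) : (shiftedSeidel G).charpoly = (shiftedSeidel H).charpoly := by
  classical
  rw [← charpoly_reindex e.toEquiv]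
  congr 1
  ext u v
  have hadj : G.Adj (e.symm u) (e.symm v) ↔ H.Adj u v := e.symm.map_adj_iff
  simp only [reindex_apply, submatrix_apply, shiftedSeidel_apply, ← hadj]
  rfl

lemma switchingEquiv_iff : SwitchingEquiv G H ↔ ∃ ε : V → ℝ, (∀ v, ε v = 1 ∨ ε v = -1) ∧
    ∀ u v, shiftedSeidel H u v = ε u * shiftedSeidel G u v * ε v := by
  refine exists_congr fun ε => and_congr_right fun hε => ?_
  have hsq (v : V) : ε v * ε v = 1 := mul_self_eq_one_iff.mpr (hε v)
  have hconj : diagonal ε * seidelMatrix G * diagonal ε + 1 =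
      diagonal ε * shiftedSeidel G * diagonal ε := by
    simp [shiftedSeidel, Matrix.mul_add, Matrix.add_mul, hsq]
  rw [← add_left_inj (1 : Matrix V V ℝ), hconj, ← Matrix.ext_iff]
  simp only [mul_diagonal, diagonal_mul, shiftedSeidel]

lemma SwitchingEquiv.trans (hGH : SwitchingEquiv G H) (hHK : SwitchingEquiv H K) :
    SwitchingEquiv G K := by
  obtain ⟨ε, hε, hH⟩ := hGH
  obtain ⟨δ, hδ, hK⟩ := hHK
  refine ⟨δ * ε, fun v => ?_, ?_⟩
  · rcases hδ v with h | h <;> rcases hε v with h' | h' <;> simp [h, h']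
  · ext u v
    simp only [hK, hH, mul_diagonal, diagonal_mul, Pi.mul_apply]
    ring

lemma SwitchingEquiv.charpoly_shiftedSeidel_eq (h : SwitchingEquiv G H) :
    (shiftedSeidel H).charpoly = (shiftedSeidel G).charpoly := by
  obtain ⟨ε, hε, hH⟩ := h
  rw [charpoly_shiftedSeidel, charpoly_shiftedSeidel, hH,
    charpoly_diagonal_mul_mul_diagonal fun v => mul_self_eq_one_iff.mpr (hε v)]

lemma exists_switchingEquiv (G : SimpleGraph V) {ε : V → ℝ} (hε : ∀ v, ε v = 1 ∨ ε v = -1) :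
    ∃ H, SwitchingEquiv G H ∧ ∀ u v, shiftedSeidel H u v = ε u * shiftedSeidel G u v * ε v := by
  classical
  let H : SimpleGraph V :=
    { Adj u v := ε u * shiftedSeidel G u v * ε v = -1
      symm := ⟨fun u v h => by rw [shiftedSeidel_comm, ← h]; ring⟩
      loopless := ⟨fun v => by
        rw [shiftedSeidel_self, mul_one, mul_self_eq_one_iff.mpr (hε v)]; norm_num⟩ }
  have hH (u v : V) : shiftedSeidel H u v = ε u * shiftedSeidel G u v * ε v := by
    rw [shiftedSeidel_apply]
    rcases hε u with hu | hu <;> rcases hε v with hv | hv <;>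
      rcases shiftedSeidel_eq_one_or_neg_one G u v with h | h <;>
      norm_num [H, hu, hv, h]
  exact ⟨H, switchingEquiv_iff.mpr ⟨ε, hε, hH⟩, hH⟩

lemma exists_switchingEquiv_forall_adj (G : SimpleGraph V) (a : V) :
    ∃ H, SwitchingEquiv G H ∧ ∀ v, v ≠ a → H.Adj a v := by
  let ε (v : V) : ℝ := if v = a then -1 else shiftedSeidel G a v
  have hε (v : V) : ε v = 1 ∨ ε v = -1 := by
    obtain rfl | hv := eq_or_ne v a
    · simp [ε]
    · simpa [ε, hv] using shiftedSeidel_eq_one_or_neg_one G a v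
  obtain ⟨H, hGH, hH⟩ := exists_switchingEquiv G hε
  refine ⟨H, hGH, fun v hv => ?_⟩
  rw [← shiftedSeidel_eq_neg_one_iff, hH]
  simp [ε, hv, mul_self_eq_one_iff, shiftedSeidel_eq_one_or_neg_one]

lemma posSemidef_shiftedSeidel_of_cliqueFree_three {a : V} (ha : ∀ v, v ≠ a → G.Adj a v)
    (hfree : G.CliqueFree 3) : (shiftedSeidel G).PosSemidef := by
  have hstar {v : V} (hv : v ≠ a) : shiftedSeidel G a v = -1 :=
    shiftedSeidel_eq_neg_one_iff.mpr (ha v hv)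
  have hindep {u v : V} (hu : u ≠ a) (hv : v ≠ a) : shiftedSeidel G u v = 1 :=
    shiftedSeidel_eq_one_iff.mpr fun huv =>
      hfree _ (is3Clique_triple_iff.mpr ⟨ha u hu, ha v hv, huv⟩)
  have hrank : shiftedSeidel G = vecMulVec (shiftedSeidel G a) (shiftedSeidel G a) := by
    ext u v
    rw [vecMulVec_apply]
    obtain rfl | hu := eq_or_ne u a
    · rw [shiftedSeidel_self, one_mul]
    obtain rfl | hv := eq_or_ne v a
    · rw [shiftedSeidel_self, mul_one, shiftedSeidel_comm]
    rw [hindep hu hv, hstar hu, hstar hv]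
    norm_num
  simpa [← hrank] using posSemidef_vecMulVec_self_star (shiftedSeidel G a)

lemma exists_switchingEquiv_not_cliqueFree_three (h : ¬(shiftedSeidel G).PosSemidef) :
    ∃ H, SwitchingEquiv G H ∧ ¬H.CliqueFree 3 := by
  obtain _ | ⟨⟨a⟩⟩ := isEmpty_or_nonempty V
  · exact absurd (Subsingleton.elim 0 (shiftedSeidel G) ▸ PosSemidef.zero) h
  obtain ⟨H, hGH, ha⟩ := exists_switchingEquiv_forall_adj G a
  refine ⟨H, hGH, fun hfree => h ?_⟩
  exact posSemidef_of_charpoly_eq (posSemidef_shiftedSeidel_of_cliqueFree_three ha hfree)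
    isHermitian_shiftedSeidel hGH.charpoly_shiftedSeidel_eq

end ShiftedSeidel

section NormalizedClique

variable {V : Type*} [Fintype V] [DecidableEq V] {G : SimpleGraph V} {s : Finset V}

lemma mulVec_indicator (M : Matrix V V ℝ) (s : Finset V) (v : V) :
    (M *ᵥ fun t => if t ∈ s then 1 else 0) v = ∑ t ∈ s, M v t := by
  simp [mulVec, dotProduct]

lemma sum_shiftedSeidel_eq_or (G : SimpleGraph V) (hs : #s = 3) (v : V) :
    ∑ t ∈ s, shiftedSeidel G v t = -3 ∨ ∑ t ∈ s, shiftedSeidel G v t = -1 ∨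
      ∑ t ∈ s, shiftedSeidel G v t = 1 ∨ ∑ t ∈ s, shiftedSeidel G v t = 3 := by
  obtain ⟨a, b, c, hab, hac, hbc, rfl⟩ := card_eq_three.mp hs
  rw [sum_insert (by simp [hab, hac]), sum_pair hbc]
  rcases shiftedSeidel_eq_one_or_neg_one G v a with ha | ha <;>
    rcases shiftedSeidel_eq_one_or_neg_one G v b with hb | hb <;>
    rcases shiftedSeidel_eq_one_or_neg_one G v c with hc | hc <;>
    norm_num [ha, hb, hc]

lemma sum_shiftedSeidel_of_isNClique {k : ℕ} (hs : G.IsNClique k s) {t : V} (ht : t ∈ s) :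
    ∑ u ∈ s, shiftedSeidel G t u = 2 - k := by
  have hadj : ∀ u ∈ s.erase t, shiftedSeidel G t u = -1 := fun u hu =>
    shiftedSeidel_eq_neg_one_iff.mpr <|
      hs.isClique ht (mem_of_mem_erase hu) (ne_of_mem_erase hu).symm
  rw [← add_sum_erase s _ ht, shiftedSeidel_self, sum_congr rfl hadj, sum_const, nsmul_eq_mul,
    cast_card_erase_of_mem ht, hs.card_eq]
  ring

lemma exists_switchingEquiv_sum_neg (hs : G.IsNClique 3 s) :
    ∃ H, SwitchingEquiv G H ∧ H.IsNClique 3 s ∧ ∀ v, ∑ t ∈ s, shiftedSeidel H v t < 0 := by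
  let σ (v : V) := ∑ t ∈ s, shiftedSeidel G v t
  let ε (v : V) : ℝ := if σ v < 0 then 1 else -1
  obtain ⟨H, hGH, hH⟩ := exists_switchingEquiv G (ε := ε) fun v => by
    simp only [ε]
    split_ifs <;> simp
  have hε {t : V} (ht : t ∈ s) : ε t = 1 := by
    have hσ : σ t = -1 := by
      simp only [σ, sum_shiftedSeidel_of_isNClique hs ht]
      norm_num
    simp [ε, hσ]
  refine ⟨H, hGH, ⟨fun t ht u hu htu => ?_, hs.card_eq⟩, fun v => ?_⟩
  · rw [← shiftedSeidel_eq_neg_one_iff, hH, hε ht, hε hu, one_mul, mul_one,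
      shiftedSeidel_eq_neg_one_iff]
    exact hs.isClique ht hu htu
  · have hsum : ∑ t ∈ s, shiftedSeidel H v t = ε v * σ v := by
      rw [mul_sum]
      exact sum_congr rfl fun t ht => by rw [hH, hε ht, mul_one]
    have hne : σ v ≠ 0 := fun h0 => by
      change ∑ t ∈ s, shiftedSeidel G v t = 0 at h0
      rcases sum_shiftedSeidel_eq_or G hs.card_eq v with h | h | h | h <;>
        norm_num [h] at h0
    rw [hsum]
    by_cases hneg : σ v < 0
    · simp [ε, hneg]
    · simp [ε, hneg, lt_of_le_of_ne (not_lt.mp hneg) hne.symm]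

lemma indicator_dotProduct_mulVec_indicator_neg {k : ℕ} (hk : 3 ≤ k) (hs : G.IsNClique k s) :
    (fun t => if t ∈ s then 1 else 0) ⬝ᵥ
      shiftedSeidel G *ᵥ (fun t => if t ∈ s then 1 else 0) < 0 := by
  have hform : (fun t => if t ∈ s then 1 else 0) ⬝ᵥ
      shiftedSeidel G *ᵥ (fun t => if t ∈ s then 1 else 0) = k * (2 - k : ℝ) := by
    simp only [dotProduct, mulVec_indicator, ite_mul, one_mul, zero_mul, sum_ite_mem,
      univ_inter, sum_congr rfl fun _ => sum_shiftedSeidel_of_isNClique hs]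
    simp [hs.card_eq, mul_sub]
  have hk' : (3 : ℝ) ≤ k := mod_cast hk
  rw [hform]
  nlinarith

lemma not_posSemidef_shiftedSeidel_of_not_cliqueFree (h : ¬G.CliqueFree 3) :
    ¬(shiftedSeidel G).PosSemidef := by
  simp only [CliqueFree, not_forall, not_not] at h
  obtain ⟨s, hs⟩ := h
  intro hpos
  exact (indicator_dotProduct_mulVec_indicator_neg le_rfl hs).not_ge
    (by simpa using hpos.dotProduct_mulVec_nonneg fun t => if t ∈ s then 1 else 0)

lemma shiftedSeidel_row_eq_of_sum_eq (hM : NegIndexLEOne (shiftedSeidel G))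
    {k : ℕ} (hk : 3 ≤ k) (hs : G.IsNClique k s) {u v : V} (huv : ¬G.Adj u v)
    (hsum : ∑ t ∈ s, shiftedSeidel G u t = ∑ t ∈ s, shiftedSeidel G v t) :
    shiftedSeidel G u = shiftedSeidel G v := by
  let d : V → ℝ := Pi.single u 1 - Pi.single v 1
  have hMd : shiftedSeidel G *ᵥ d = shiftedSeidel G u - shiftedSeidel G v := by
    ext w
    simp [d, mulVec_sub, shiftedSeidel_comm w]
  have hd : d ⬝ᵥ shiftedSeidel G *ᵥ d = 0 := by
    have huv' : shiftedSeidel G u v = 1 := shiftedSeidel_eq_one_iff.mpr huv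
    simp [hMd, d, sub_dotProduct, shiftedSeidel_self, huv', shiftedSeidel_comm v u]
  have hdz : d ⬝ᵥ shiftedSeidel G *ᵥ (fun t => if t ∈ s then 1 else 0) = 0 := by
    simp [d, sub_dotProduct, mulVec_indicator, hsum]
  rw [← sub_eq_zero, ← hMd]
  exact hM.mulVec_eq_zero (indicator_dotProduct_mulVec_indicator_neg hk hs) hd hdz

lemma sum_le_sum_of_not_adj (hM : NegIndexLEOne (shiftedSeidel G)) (hs : G.IsNClique 3 s)
    (hneg : ∀ v, ∑ t ∈ s, shiftedSeidel G v t < 0) {u v : V} (huv : ¬G.Adj u v) :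
    ∑ t ∈ s, shiftedSeidel G u t ≤ ∑ t ∈ s, shiftedSeidel G v t := by
  by_contra! hlt
  have hsum (w : V) :
      ∑ t ∈ s, shiftedSeidel G w t = -3 ∨ ∑ t ∈ s, shiftedSeidel G w t = -1 := by
    rcases sum_shiftedSeidel_eq_or G hs.card_eq w with h | h | h | h
    · exact Or.inl h
    · exact Or.inr h
    all_goals linarith [hneg w]
  have hu : ∑ t ∈ s, shiftedSeidel G u t = -1 := by
    rcases hsum u with h | h
    · rcases hsum v with h' | h' <;> linarith
    · exact h
  obtain ⟨t, ht, hlt_t⟩ := exists_lt_of_sum_lt hlt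
  have hut : shiftedSeidel G u t = 1 ∧ shiftedSeidel G v t = -1 := by
    rcases shiftedSeidel_eq_one_or_neg_one G u t with h | h <;>
      rcases shiftedSeidel_eq_one_or_neg_one G v t with h' | h' <;>
      first | exact ⟨h, h'⟩ | linarith
  have hrow : shiftedSeidel G u = shiftedSeidel G t :=
    shiftedSeidel_row_eq_of_sum_eq hM le_rfl hs (shiftedSeidel_eq_one_iff.mp hut.1) <| by
      rw [hu, sum_shiftedSeidel_of_isNClique hs ht]
      norm_num
  have hadj : shiftedSeidel G u v = -1 := by rw [hrow, shiftedSeidel_comm, hut.2]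
  exact huv (shiftedSeidel_eq_neg_one_iff.mp hadj)

lemma isCompleteMultipartite_of_negIndexLEOne (hM : NegIndexLEOne (shiftedSeidel G))
    (hs : G.IsNClique 3 s) (hneg : ∀ v, ∑ t ∈ s, shiftedSeidel G v t < 0) :
    G.IsCompleteMultipartite := by
  refine ⟨fun u v w huv hvw => ?_⟩
  have hrow : shiftedSeidel G u = shiftedSeidel G v :=
    shiftedSeidel_row_eq_of_sum_eq hM le_rfl hs huv <|
      (sum_le_sum_of_not_adj hM hs hneg huv).antisymm
        (sum_le_sum_of_not_adj hM hs hneg fun hvu => huv hvu.symm)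
  rwa [← shiftedSeidel_eq_one_iff, hrow, shiftedSeidel_eq_one_iff]

end NormalizedClique

section CompleteMultipartite

lemma nonempty_iso_completeMultipartiteGraph_of_card_eq {ι κ : Type*} {V : ι → Type*}
    {V' : κ → Type*} [∀ i, Fintype (V i)] [∀ j, Fintype (V' j)] (e : ι ≃ κ)
    (he : ∀ i, Fintype.card (V' (e i)) = Fintype.card (V i)) :
    Nonempty (completeMultipartiteGraph V ≃g completeMultipartiteGraph V') :=
  ⟨Equiv.sigmaCongr e fun i => Fintype.equivOfCardEq (he i).symm, not_congr e.apply_eq_iff_eq⟩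

variable {ι : Type*} [DecidableEq ι]

/-- The incidence matrix between the vertices of `completeMultipartiteGraph V` and its parts. -/
def partIncidence (V : ι → Type*) : Matrix (Σ i, V i) ι ℝ :=
  .of fun v i => if v.1 = i then 1 else 0

variable [Fintype ι]

lemma partIncidence_mul_apply (V : ι → Type*) {n : Type*} (B : Matrix ι n ℝ) (v : Σ i, V i)
    (j : n) : (partIncidence V * B) v j = B v.1 j := by
  simp [partIncidence, Matrix.mul_apply]

variable {V : ι → Type*} [∀ i, Fintype (V i)]

lemma transpose_partIncidence_mul_partIncidence :
    (partIncidence V)ᵀ * partIncidence V = diagonal fun i => (Fintype.card (V i) : ℝ) := by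
  ext i j
  obtain rfl | hij := eq_or_ne i j
  · simp [partIncidence, Matrix.mul_apply, Fintype.sum_sigma]
  · simp [partIncidence, Matrix.mul_apply, Fintype.sum_sigma, hij, hij.symm]

lemma one_vecMul_partIncidence :
    1 ᵥ* partIncidence V = fun i => (Fintype.card (V i) : ℝ) := by
  ext i
  rw [vecMul, dotProduct, Fintype.sum_sigma]
  simp [partIncidence]

variable [∀ i, DecidableEq (V i)]

lemma shiftedSeidel_completeMultipartiteGraph :
    shiftedSeidel (completeMultipartiteGraph V) =
      partIncidence V * ((2 : ℝ) • (partIncidence V)ᵀ - vecMulVec 1 1) := by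
  classical
  ext u v
  rw [partIncidence_mul_apply, shiftedSeidel_apply]
  by_cases h : u.1 = v.1
  · norm_num [partIncidence, h]
  · simp [partIncidence, h, Ne.symm h]

lemma X_pow_mul_charpoly_shiftedSeidel_completeMultipartiteGraph :
    X ^ Fintype.card ι * (shiftedSeidel (completeMultipartiteGraph V)).charpoly =
      X ^ Fintype.card (Σ i, V i) * secularPoly (2 * fun i => (Fintype.card (V i) : ℝ))
        fun i => (Fintype.card (V i) : ℝ) := by
  rw [shiftedSeidel_completeMultipartiteGraph, charpoly_mul_comm', Matrix.sub_mul, smul_mul,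
    transpose_partIncidence_mul_partIncidence, vecMulVec_mul, one_vecMul_partIncidence,
    ← diagonal_smul, charpoly_diagonal_sub_vecMulVec, one_mul]
  rfl

lemma negIndexLEOne_shiftedSeidel_completeMultipartiteGraph :
    NegIndexLEOne (shiftedSeidel (completeMultipartiteGraph V)) := by
  have hsquare : shiftedSeidel (completeMultipartiteGraph V) + vecMulVec 1 1 =
      (2 : ℝ) • (partIncidence V * (partIncidence V)ᴴ) := by
    ext u v
    simp [shiftedSeidel_completeMultipartiteGraph, partIncidence_mul_apply]
  exact ⟨1, hsquare ▸ (posSemidef_self_mul_conjTranspose _).smul zero_le_two⟩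

variable {κ : Type*} [Fintype κ] [DecidableEq κ] {V' : κ → Type*} [∀ j, Fintype (V' j)]
  [∀ j, DecidableEq (V' j)]

lemma X_pow_mul_secularPoly_eq_of_charpoly_eq
    (h : (shiftedSeidel (completeMultipartiteGraph V)).charpoly =
      (shiftedSeidel (completeMultipartiteGraph V')).charpoly) :
    X ^ Fintype.card κ * secularPoly (2 * fun i => (Fintype.card (V i) : ℝ))
        (fun i => (Fintype.card (V i) : ℝ)) =
      X ^ Fintype.card ι * secularPoly (2 * fun j => (Fintype.card (V' j) : ℝ))
        fun j => (Fintype.card (V' j) : ℝ) := by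
  have horder : Fintype.card (Σ i, V i) = Fintype.card (Σ j, V' j) := by
    rw [← charpoly_natDegree_eq_dim (shiftedSeidel (completeMultipartiteGraph V)), h,
      charpoly_natDegree_eq_dim]
  refine mul_left_cancel₀ (pow_ne_zero (Fintype.card (Σ i, V i)) (X_ne_zero (R := ℝ))) ?_
  rw [mul_left_comm, ← X_pow_mul_charpoly_shiftedSeidel_completeMultipartiteGraph, h,
    mul_left_comm, X_pow_mul_charpoly_shiftedSeidel_completeMultipartiteGraph, ← horder,
    mul_left_comm]

lemma nonempty_iso_completeMultipartiteGraph_of_charpoly_eq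
    [∀ i, Nonempty (V i)] [∀ j, Nonempty (V' j)] {n : ℕ}
    (hn : 3 ≤ #{i | Fintype.card (V i) = n}) (hκ : 3 ≤ Fintype.card κ)
    (h : (shiftedSeidel (completeMultipartiteGraph V)).charpoly =
      (shiftedSeidel (completeMultipartiteGraph V')).charpoly) :
    Nonempty (completeMultipartiteGraph V ≃g completeMultipartiteGraph V') := by
  obtain ⟨e, he⟩ := exists_equiv_of_X_pow_mul_secularPoly_eq (c := (n : ℝ))
    (fun _ => Nat.cast_pos.mpr Fintype.card_pos) (fun _ => Nat.cast_pos.mpr Fintype.card_pos)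
    (by simpa using hn) hκ (X_pow_mul_secularPoly_eq_of_charpoly_eq h)
  exact nonempty_iso_completeMultipartiteGraph_of_card_eq e fun i => mod_cast he i

lemma nonempty_iso_of_isCompleteMultipartite_of_charpoly_eq {W : Type*} [Fintype W]
    [DecidableEq W] {H : SimpleGraph W} [∀ i, Nonempty (V i)] {n : ℕ}
    (hn : 3 ≤ #{i | Fintype.card (V i) = n}) (hH : H.IsCompleteMultipartite)
    (hclique : ¬H.CliqueFree 3)
    (h : (shiftedSeidel (completeMultipartiteGraph V)).charpoly = (shiftedSeidel H).charpoly) :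
    Nonempty (H ≃g completeMultipartiteGraph V) := by
  classical
  obtain ⟨κ, V', hV', ⟨f⟩⟩ := isCompleteMultipartite_iff.mp hH
  have : Finite (Σ j, V' j) := .of_equiv _ f.toEquiv
  have : Fintype κ :=
    have : Finite κ := .of_surjective (Sigma.fst : (Σ j, V' j) → κ) Sigma.fst_surjective
    .ofFinite κ
  have (j : κ) : Fintype (V' j) :=
    have : Finite (V' j) := .of_injective _ (sigma_mk_injective (i := j))
    .ofFinite _
  have hκ : 3 ≤ Fintype.card κ := by
    by_contra! hlt
    exact hclique ((cliqueFree_completeMultipartiteGraph V' hlt).comap f.isContained)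
  obtain ⟨g⟩ := nonempty_iso_completeMultipartiteGraph_of_charpoly_eq hn hκ
    (h.trans (charpoly_shiftedSeidel_of_iso f))
  exact ⟨f.trans g.symm⟩

end CompleteMultipartite

theorem exists_switchingEquiv_isCompleteMultipartite {V : Type*} [Fintype V] [DecidableEq V]
    {H : SimpleGraph V} (hneg : NegIndexLEOne (shiftedSeidel H))
    (hpos : ¬(shiftedSeidel H).PosSemidef) :
    ∃ H', SwitchingEquiv H H' ∧ H'.IsCompleteMultipartite ∧ ¬H'.CliqueFree 3 := by
  obtain ⟨H₁, hH₁, hclique⟩ := exists_switchingEquiv_not_cliqueFree_three hpos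
  simp only [CliqueFree, not_forall, not_not] at hclique
  obtain ⟨s, hs⟩ := hclique
  obtain ⟨H₂, hH₂, hs₂, hsum⟩ := exists_switchingEquiv_sum_neg hs
  have hswitch : SwitchingEquiv H H₂ := hH₁.trans hH₂
  have hneg₂ : NegIndexLEOne (shiftedSeidel H₂) :=
    hneg.of_charpoly_eq isHermitian_shiftedSeidel hswitch.charpoly_shiftedSeidel_eq.symm
  exact ⟨H₂, hswitch, isCompleteMultipartite_of_negIndexLEOne hneg₂ hs₂ hsum,
    hs₂.not_cliqueFree⟩

theorem sDetermined_completeMultipartiteGraph_of_three_le_card {ι : Type} [Fintype ι]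
    [DecidableEq ι] {V : ι → Type} [∀ i, Fintype (V i)] [∀ i, DecidableEq (V i)]
    [∀ i, Nonempty (V i)] {n : ℕ} (hn : 3 ≤ #{i | Fintype.card (V i) = n}) :
    SDetermined (completeMultipartiteGraph V) := by
  classical
  intro W _ _ H hH
  have hcharpoly : (shiftedSeidel (completeMultipartiteGraph V)).charpoly =
      (shiftedSeidel H).charpoly := by
    rw [charpoly_shiftedSeidel, charpoly_shiftedSeidel, hH]
  have hV : ¬(completeMultipartiteGraph V).CliqueFree 3 :=
    completeMultipartiteGraph.not_cliqueFree_of_le_card V (fun _ => Classical.arbitrary _) <|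
      hn.trans (card_filter_le _ _)
  obtain ⟨H', hHH', hmulti, hclique⟩ := exists_switchingEquiv_isCompleteMultipartite
    (negIndexLEOne_shiftedSeidel_completeMultipartiteGraph.of_charpoly_eq
      isHermitian_shiftedSeidel hcharpoly)
    fun hpos => not_posSemidef_shiftedSeidel_of_not_cliqueFree hV <|
      posSemidef_of_charpoly_eq hpos isHermitian_shiftedSeidel hcharpoly.symm
  exact ⟨H', hHH', nonempty_iso_of_isCompleteMultipartite_of_charpoly_eq hn hmulti hclique
    (hcharpoly.trans hHH'.charpoly_shiftedSeidel_eq.symm)⟩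

/-- **Theorem.** The complete `k`-partite graph `K_{r_1·n_1,…,r_s·n_s}`, in which
some part size occurs with multiplicity at least `3` (`r i ≥ 3` for some `i`),
is determined, up to switching, by its Seidel spectrum. -/
theorem sDetermined_of_multiplicity_ge_three (s : ℕ) (r n : Fin s → ℕ)
    (hr : ∀ i, 1 ≤ r i) (hn : ∀ i, 1 ≤ n i) (hdist : Function.Injective n)
    (hthree : ∃ i, 3 ≤ r i) :
    SDetermined (completeMultipartiteGraph
      fun p : (i : Fin s) × Fin (r i) => Fin (n p.1)) := by
  obtain ⟨i, hi⟩ := hthree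
  have (p : (i : Fin s) × Fin (r i)) : Nonempty (Fin (n p.1)) := ⟨⟨0, hn p.1⟩⟩
  apply sDetermined_completeMultipartiteGraph_of_three_le_card (n := n i)
  calc
    3 ≤ r i := hi
    _ = #(univ.map (Function.Embedding.sigmaMk (β := fun i => Fin (r i)) i)) := by simp
    _ ≤ _ := card_le_card fun p hp => by
      obtain ⟨t, -, rfl⟩ := mem_map.mp hp
      simp
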